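/- Assume φ₀ < 0 and f(ρ₀, φ₀) > 0. Then the set of critical points of X in the closed disk D_R consists of exactly two points, both on the horizontal axis: points (x_c, 0) and (x_s, 0) with 0 < x_c < x_M < x_s < r₀, where x_M = (R² + r₀² − √(R⁴ − R²r₀² + r₀⁴))/(3r₀); moreover det DX(x_c, 0) > 0 (a center) and det DX(x_s, 0) < 0 (a hyperbolic saddle). (Case (d) of Theorem 1.) -/

import Mathlib

/-- The Jacobian matrix of a planar vector field `X : ℝ → ℝ → ℝ × ℝ` at the point `(x, y)`. -/
noncomputable def jacobianMatrix (X : ℝ → ℝ → ℝ × ℝ) (x y : ℝ) : Matrix (Fin 2) (Fin 2) ℝ :=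
  !![deriv (fun s => (X s y).1) x, deriv (fun s => (X x s).1) y;
     deriv (fun s => (X s y).2) x, deriv (fun s => (X x s).2) y]

/-!
Let the vortex be at `(p, 0)` and its image at `(q, 0)`. Off the axis the first component of the
field is `θ y (c K - 1)`, where `K` is the difference of the inverse squared distances to the vortex
and to its image. On the side of the perpendicular bisector that contains the vortex `K ≥ 0`, so
`c < 0` forces critical points onto the axis. There they are the solutions of `C x = -c (q - p)` for
the cubic `C x = x (p - x) (q - x)`, whose only peak on `(0, p)` is at `x_M`, and the Jacobian
determinant has the sign of the derivative of `C`. The condition `f > 0` says exactly that the level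
`-c (q - p)` lies below the peak value, so it is met once on each side of `x_M`.
-/

open Set Real

section AxialCubic

/-- The cubic with roots `0`, `p`, `q` whose level sets are the critical points on the axis of a
vortex at `p` with image at `q`. -/
def axialCubic (p q x : ℝ) : ℝ := x * (p - x) * (q - x)

/-- The smaller critical point of `axialCubic p q`, where the cubic has its local maximum; this is
the paper's `x_M`. -/
noncomputable def axialCubicPeak (p q : ℝ) : ℝ := (p + q - √(p ^ 2 - p * q + q ^ 2)) / 3

variable {p q m x : ℝ}

lemma continuous_axialCubic (p q : ℝ) : Continuous (axialCubic p q) := by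
  unfold axialCubic
  fun_prop

lemma deriv_axialCubic (p q x : ℝ) :
    deriv (axialCubic p q) x = 3 * x ^ 2 - 2 * (p + q) * x + p * q := by
  have h := ((hasDerivAt_id x).fun_mul ((hasDerivAt_id x).const_sub p)).fun_mul
    ((hasDerivAt_id x).const_sub q)
  refine (h.congr_deriv ?_).deriv
  simp only [id_eq]
  ring

lemma sq_sqrt_axialCubic_discrim (p q : ℝ) :
    √(p ^ 2 - p * q + q ^ 2) ^ 2 = p ^ 2 - p * q + q ^ 2 :=
  sq_sqrt (by nlinarith [sq_nonneg (p - q), sq_nonneg (p + q)])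

lemma deriv_axialCubic_eq_mul (p q x : ℝ) :
    deriv (axialCubic p q) x =
      3 * ((x - axialCubicPeak p q) * (x - (p + q + √(p ^ 2 - p * q + q ^ 2)) / 3)) := by
  rw [deriv_axialCubic, axialCubicPeak]
  linear_combination (1 / 3 : ℝ) * sq_sqrt_axialCubic_discrim p q

lemma axialCubic_axialCubicPeak (p q : ℝ) :
    axialCubic p q (axialCubicPeak p q) =
      (2 * √(p ^ 2 - p * q + q ^ 2) ^ 3
        - (2 * p ^ 3 - 3 * p ^ 2 * q - 3 * p * q ^ 2 + 2 * q ^ 3)) / 27 := by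
  rw [axialCubic, axialCubicPeak]
  linear_combination (-√(p ^ 2 - p * q + q ^ 2) / 9) * sq_sqrt_axialCubic_discrim p q

lemma axialCubicPeak_pos (hp : 0 < p) (hq : 0 < q) : 0 < axialCubicPeak p q := by
  have h : √(p ^ 2 - p * q + q ^ 2) < p + q :=
    (sqrt_lt' (add_pos hp hq)).2 (by nlinarith [mul_pos hp hq])
  unfold axialCubicPeak
  linarith

lemma axialCubicPeak_lt (hp : 0 < p) (hpq : p < q) : axialCubicPeak p q < p := by
  have h : q - 2 * p < √(p ^ 2 - p * q + q ^ 2) := lt_sqrt_of_sq_lt (by nlinarith)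
  unfold axialCubicPeak
  linarith

lemma deriv_axialCubic_pos (hx : x < axialCubicPeak p q) : 0 < deriv (axialCubic p q) x := by
  have hx' : x < (p + q + √(p ^ 2 - p * q + q ^ 2)) / 3 := by
    have := sqrt_nonneg (p ^ 2 - p * q + q ^ 2)
    unfold axialCubicPeak at hx
    linarith
  rw [deriv_axialCubic_eq_mul]
  exact mul_pos three_pos (mul_pos_of_neg_of_neg (sub_neg.2 hx) (sub_neg.2 hx'))

lemma deriv_axialCubic_neg (hp : 0 < p) (hpq : p < q) (hx : axialCubicPeak p q < x)
    (hxp : x ≤ p) : deriv (axialCubic p q) x < 0 := by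
  have hx' : x < (p + q + √(p ^ 2 - p * q + q ^ 2)) / 3 := by
    have : 2 * p - q < √(p ^ 2 - p * q + q ^ 2) := lt_sqrt_of_sq_lt (by nlinarith)
    linarith
  rw [deriv_axialCubic_eq_mul]
  exact mul_neg_of_pos_of_neg three_pos (mul_neg_of_pos_of_neg (sub_pos.2 hx) (sub_neg.2 hx'))

lemma strictMonoOn_axialCubic (p q : ℝ) :
    StrictMonoOn (axialCubic p q) (Iic (axialCubicPeak p q)) :=
  strictMonoOn_of_deriv_pos (convex_Iic _) (continuous_axialCubic p q).continuousOn
    fun _ hx => deriv_axialCubic_pos (by simpa only [interior_Iic, mem_Iio] using hx)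

lemma strictAntiOn_axialCubic (hp : 0 < p) (hpq : p < q) :
    StrictAntiOn (axialCubic p q) (Icc (axialCubicPeak p q) p) :=
  strictAntiOn_of_deriv_neg (convex_Icc _ _) (continuous_axialCubic p q).continuousOn
    fun _ hx => by
      rw [interior_Icc] at hx
      exact deriv_axialCubic_neg hp hpq hx.1 hx.2.le

lemma axialCubic_nonpos (hp : 0 ≤ p) (hpx : p ≤ x) (hxq : x ≤ q) : axialCubic p q x ≤ 0 :=
  mul_nonpos_of_nonpos_of_nonneg
    (mul_nonpos_of_nonneg_of_nonpos (hp.trans hpx) (sub_nonpos.2 hpx)) (sub_nonneg.2 hxq)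

theorem exists_forall_axialCubic_eq_iff (hp : 0 < p) (hpq : p < q) (hm : 0 < m)
    (hmax : m < axialCubic p q (axialCubicPeak p q)) :
    ∃ xc ∈ Ioo 0 (axialCubicPeak p q), ∃ xs ∈ Ioo (axialCubicPeak p q) p,
      ∀ x ≤ q, axialCubic p q x = m ↔ x = xc ∨ x = xs := by
  have hcont := continuous_axialCubic p q
  obtain ⟨xc, hxc, hc⟩ := intermediate_value_Ioo (axialCubicPeak_pos hp (hp.trans hpq)).le
    hcont.continuousOn (show m ∈ Ioo _ _ from ⟨by simpa [axialCubic] using hm, hmax⟩)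
  obtain ⟨xs, hxs, hs⟩ := intermediate_value_Ioo' (axialCubicPeak_lt hp hpq).le
    hcont.continuousOn (show m ∈ Ioo _ _ from ⟨by simpa [axialCubic] using hm, hmax⟩)
  refine ⟨xc, hxc, xs, hxs, fun x hxq => ⟨fun hx => ?_, ?_⟩⟩
  · have hxp : x ≤ p := by
      by_contra! hpx
      exact (hx ▸ hm).not_ge (axialCubic_nonpos hp.le hpx.le hxq)
    rcases le_total x (axialCubicPeak p q) with hle | hge
    · exact .inl ((strictMonoOn_axialCubic p q).injOn hle hxc.2.le (hx.trans hc.symm))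
    · exact .inr ((strictAntiOn_axialCubic hp hpq).injOn ⟨hge, hxp⟩ (Ioo_subset_Icc_self hxs)
        (hx.trans hs.symm))
  · rintro (rfl | rfl)
    exacts [hc, hs]

end AxialCubic

section VortexPair

/-- The difference of the inverse squared distances from `(x, y)` to `(p, 0)` and to `(q, 0)`. -/
noncomputable def vortexPairKernel (p q x y : ℝ) : ℝ :=
  1 / ((x - p) ^ 2 + y ^ 2) - 1 / ((x - q) ^ 2 + y ^ 2)

/-- The rigid rotation with angular velocity `θ` plus the velocity of two opposite vortices at
`(p, 0)` and `(q, 0)`, of strength scaled as `c * θ`. The paper's field on the disk of radius `R`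
has `p = r₀` and, by the method of images, `q = R ^ 2 / r₀`. -/
noncomputable def vortexPairField (p q θ c x y : ℝ) : ℝ × ℝ :=
  (-θ * y + c * θ * y * vortexPairKernel p q x y,
    θ * x - c * θ *
      ((x - p) / ((x - p) ^ 2 + y ^ 2) - (x - q) / ((x - q) ^ 2 + y ^ 2)))

variable {p q θ c x y : ℝ}

lemma vortexPairKernel_nonneg (hpq : p ≤ q) (hx : 2 * x ≤ p + q) (hxy : (x, y) ≠ (p, 0)) :
    0 ≤ vortexPairKernel p q x y := by
  have hpos : 0 < (x - p) ^ 2 + y ^ 2 := by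
    by_cases hy : y = 0
    · have hxp : x - p ≠ 0 := sub_ne_zero.2 fun h => hxy (by rw [h, hy])
      positivity
    · positivity
  have hle : (x - p) ^ 2 + y ^ 2 ≤ (x - q) ^ 2 + y ^ 2 := by
    nlinarith [mul_nonneg (sub_nonneg.2 hpq) (sub_nonneg.2 hx)]
  exact sub_nonneg.2 (one_div_le_one_div_of_le hpos hle)

lemma eq_zero_of_vortexPairField_fst_eq_zero (hpq : p ≤ q) (hθ : θ ≠ 0) (hc : c ≤ 0)
    (hx : 2 * x ≤ p + q) (hxy : (x, y) ≠ (p, 0)) (h : (vortexPairField p q θ c x y).1 = 0) :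
    y = 0 := by
  have hfac : θ * y * (c * vortexPairKernel p q x y - 1) = 0 := by
    rw [← h, vortexPairField]
    ring
  have hne : c * vortexPairKernel p q x y - 1 ≠ 0 := by
    linarith [mul_nonpos_of_nonpos_of_nonneg hc (vortexPairKernel_nonneg hpq hx hxy)]
  simpa only [mul_eq_zero, hθ, hne, false_or, or_false] using hfac

lemma vortexPairField_axis_eq_zero_iff (hθ : θ ≠ 0) (hxp : x ≠ p) (hxq : x ≠ q) :
    vortexPairField p q θ c x 0 = (0, 0) ↔ axialCubic p q x = -c * (q - p) := by
  have hp := sub_ne_zero.2 hxp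
  have hq := sub_ne_zero.2 hxq
  have hfst : (vortexPairField p q θ c x 0).1 = 0 := by simp [vortexPairField]
  have hsnd : (vortexPairField p q θ c x 0).2 =
      θ / ((x - p) * (x - q)) * (axialCubic p q x - -c * (q - p)) := by
    simp only [vortexPairField, axialCubic]
    field_simp
    ring
  have hne : θ / ((x - p) * (x - q)) ≠ 0 := div_ne_zero hθ (mul_ne_zero hp hq)
  simp only [Prod.ext_iff, hfst, hsnd, true_and, mul_eq_zero, hne, false_or, sub_eq_zero]

lemma hasDerivAt_one_div_sq_add_sq_zero {a : ℝ} (ha : a ≠ 0) :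
    HasDerivAt (fun s : ℝ => 1 / (a ^ 2 + s ^ 2)) 0 0 := by
  have h := ((hasDerivAt_pow 2 (0 : ℝ)).const_add (a ^ 2)).fun_inv (by simpa using ha)
  simpa [one_div] using h

lemma hasDerivAt_vortexPairField_fst_axis (hxp : x ≠ p) (hxq : x ≠ q) :
    HasDerivAt (fun s => (vortexPairField p q θ c x s).1)
      (θ * (c * vortexPairKernel p q x 0 - 1)) 0 := by
  have hK := (hasDerivAt_one_div_sq_add_sq_zero (sub_ne_zero.2 hxp)).fun_sub
    (hasDerivAt_one_div_sq_add_sq_zero (sub_ne_zero.2 hxq))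
  have h := ((hasDerivAt_id (0 : ℝ)).const_mul (-θ)).fun_add
    (((hasDerivAt_id (0 : ℝ)).const_mul (c * θ)).fun_mul hK)
  refine h.congr_deriv ?_
  simp only [vortexPairKernel, id_eq]
  ring

lemma hasDerivAt_vortexPairField_snd_axis (hxp : x ≠ p) (hxq : x ≠ q) :
    HasDerivAt (fun s => (vortexPairField p q θ c s 0).2)
      (θ * (c * vortexPairKernel p q x 0 + 1)) x := by
  have hinv {a : ℝ} (ha : x ≠ a) :
      HasDerivAt (fun s : ℝ => (s - a)⁻¹) (-1 / (x - a) ^ 2) x :=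
    ((hasDerivAt_id x).sub_const a).fun_inv (sub_ne_zero.2 ha)
  have heq : (fun s => (vortexPairField p q θ c s 0).2) =
      fun s => θ * s - c * θ * ((s - p)⁻¹ - (s - q)⁻¹) := by
    have hz (z : ℝ) : z / (z ^ 2 + 0 ^ 2) = z⁻¹ := by
      rcases eq_or_ne z 0 with rfl | h
      · simp
      · field_simp
        simp
    simp only [vortexPairField, hz]
  rw [heq]
  have h := ((hasDerivAt_id x).const_mul θ).fun_sub
    (((hinv hxp).fun_sub (hinv hxq)).const_mul (c * θ))
  refine h.congr_deriv ?_
  rw [vortexPairKernel]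
  ring

lemma det_jacobianMatrix_vortexPairField_axis (hxp : x ≠ p) (hxq : x ≠ q) :
    (jacobianMatrix (vortexPairField p q θ c) x 0).det =
      θ ^ 2 * (1 - c * vortexPairKernel p q x 0) * (c * vortexPairKernel p q x 0 + 1) := by
  have hfst : deriv (fun s => (vortexPairField p q θ c s 0).1) x = 0 := by
    simp [vortexPairField]
  rw [jacobianMatrix, Matrix.det_fin_two_of, hfst,
    (hasDerivAt_vortexPairField_fst_axis hxp hxq).deriv,
    (hasDerivAt_vortexPairField_snd_axis hxp hxq).deriv]
  ring

lemma mul_vortexPairKernel_axis_add_one (hpq : p ≠ q) (hxp : x ≠ p) (hxq : x ≠ q)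
    (hx : axialCubic p q x = -c * (q - p)) :
    c * vortexPairKernel p q x 0 + 1 = deriv (axialCubic p q) x / ((p - x) * (q - x)) := by
  have hp := sub_ne_zero.2 hxp.symm
  have hq := sub_ne_zero.2 hxq.symm
  have hd := sub_ne_zero.2 hpq.symm
  have hc : c = -(x * (p - x) * (q - x)) / (q - p) := by
    rw [axialCubic] at hx
    rw [eq_div_iff hd]
    linear_combination hx
  rw [deriv_axialCubic, vortexPairKernel, hc, ← neg_sub p x, ← neg_sub q x]
  field_simp
  ring

lemma sign_det_jacobianMatrix_vortexPairField (hθ : θ ≠ 0) (hc : c ≤ 0) (hpq : p < q)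
    (hxp : x < p) (hx : axialCubic p q x = -c * (q - p)) :
    SignType.sign (jacobianMatrix (vortexPairField p q θ c) x 0).det =
      SignType.sign (deriv (axialCubic p q) x) := by
  have hxq := hxp.trans hpq
  have hK : 0 ≤ vortexPairKernel p q x 0 :=
    vortexPairKernel_nonneg hpq.le (by linarith) (by simp [hxp.ne])
  have hcK : 0 < 1 - c * vortexPairKernel p q x 0 := by
    linarith [mul_nonpos_of_nonpos_of_nonneg hc hK]
  have hscale : 0 < θ ^ 2 * (1 - c * vortexPairKernel p q x 0) / ((p - x) * (q - x)) :=
    div_pos (mul_pos (by positivity) hcK) (mul_pos (sub_pos.2 hxp) (sub_pos.2 hxq))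
  have hdet : (jacobianMatrix (vortexPairField p q θ c) x 0).det =
      θ ^ 2 * (1 - c * vortexPairKernel p q x 0) / ((p - x) * (q - x)) *
        deriv (axialCubic p q) x := by
    rw [det_jacobianMatrix_vortexPairField_axis hxp.ne hxq.ne,
      mul_vortexPairKernel_axis_add_one hpq.ne hxp.ne hxq.ne hx, mul_div_left_comm, mul_comm]
  rw [hdet, sign_mul, sign_pos hscale, one_mul]

theorem exists_center_saddle_vortexPairField (hp : 0 < p) (hpq : p < q) (hθ : θ ≠ 0)
    (hc : c < 0) (hmax : -c * (q - p) < axialCubic p q (axialCubicPeak p q)) :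
    ∃ xc ∈ Ioo 0 (axialCubicPeak p q), ∃ xs ∈ Ioo (axialCubicPeak p q) p,
      vortexPairField p q θ c xc 0 = (0, 0) ∧
      0 < (jacobianMatrix (vortexPairField p q θ c) xc 0).det ∧
      vortexPairField p q θ c xs 0 = (0, 0) ∧
      (jacobianMatrix (vortexPairField p q θ c) xs 0).det < 0 ∧
      ∀ x y, 2 * x ≤ p + q → (x, y) ≠ (p, 0) → vortexPairField p q θ c x y = (0, 0) →
        (x, y) = (xc, 0) ∨ (x, y) = (xs, 0) := by
  obtain ⟨xc, hxc, xs, hxs, hroots⟩ := exists_forall_axialCubic_eq_iff hp hpq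
    (mul_pos (neg_pos.2 hc) (sub_pos.2 hpq)) hmax
  have hcp : xc < p := hxc.2.trans (axialCubicPeak_lt hp hpq)
  have hc_root := (hroots xc (hcp.trans hpq).le).2 (.inl rfl)
  have hs_root := (hroots xs (hxs.2.trans hpq).le).2 (.inr rfl)
  refine ⟨xc, hxc, xs, hxs,
    (vortexPairField_axis_eq_zero_iff hθ hcp.ne (hcp.trans hpq).ne).2 hc_root, ?_,
    (vortexPairField_axis_eq_zero_iff hθ hxs.2.ne (hxs.2.trans hpq).ne).2 hs_root, ?_, ?_⟩
  · rw [← sign_eq_one_iff, sign_det_jacobianMatrix_vortexPairField hθ hc.le hpq hcp hc_root,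
      sign_eq_one_iff]
    exact deriv_axialCubic_pos hxc.2
  · rw [← sign_eq_neg_one_iff,
      sign_det_jacobianMatrix_vortexPairField hθ hc.le hpq hxs.2 hs_root, sign_eq_neg_one_iff]
    exact deriv_axialCubic_neg hp hpq hxs.1 hxs.2.le
  · intro x y hx hxy h
    obtain rfl : y = 0 := eq_zero_of_vortexPairField_fst_eq_zero hpq.le hθ hc.le hx hxy
      (congrArg Prod.fst h)
    have hxp : x ≠ p := fun hxp => hxy (by rw [hxp])
    have hxq : x < q := by linarith
    have hroot := (vortexPairField_axis_eq_zero_iff hθ hxp hxq.ne).1 h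
    simpa using (hroots x hxq.le).1 hroot

end VortexPair

section ImageVortex

/-- The paper's function `f(ρ, φ)`, whose zero set separates the regime with two critical points
from the one with none when `φ < 0`. -/
noncomputable def bifurcationFunction (ρ φ : ℝ) : ℝ :=
  27 * ρ ^ 2 * (ρ ^ 2 - 1) +
    φ * (2 - 3 * ρ ^ 2 - 3 * ρ ^ 4 + 2 * ρ ^ 6 - 2 * (1 - ρ ^ 2 + ρ ^ 4) ^ ((3 : ℝ) / 2))

variable {R p q c x y : ℝ}

lemma axialCubicPeak_of_sq_eq_mul (hp : 0 < p) (hR : R ^ 2 = p * q) :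
    axialCubicPeak p q = (R ^ 2 + p ^ 2 - √(R ^ 4 - R ^ 2 * p ^ 2 + p ^ 4)) / (3 * p) := by
  have hsqrt : √(R ^ 4 - R ^ 2 * p ^ 2 + p ^ 4) = p * √(p ^ 2 - p * q + q ^ 2) := by
    have hfac : R ^ 4 - R ^ 2 * p ^ 2 + p ^ 4 = p ^ 2 * (p ^ 2 - p * q + q ^ 2) := by
      linear_combination (R ^ 2 + p * q - p ^ 2) * hR
    rw [hfac, sqrt_mul (sq_nonneg p), sqrt_sq hp.le]
  rw [axialCubicPeak, hsqrt, hR]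
  field_simp
  ring

lemma bifurcationFunction_eq (hp : 0 < p) (hq : 0 < q) (hR : R ^ 2 = p * q) (hc : c ≠ 0) :
    bifurcationFunction (p / R) (R ^ 2 / c) =
      27 * p / (q ^ 2 * -c) * (axialCubic p q (axialCubicPeak p q) - -c * (q - p)) := by
  have hρ2 : (p / R) ^ 2 = p / q := by
    rw [div_pow, hR]
    field_simp
  have hρ4 : (p / R) ^ 4 = (p / q) ^ 2 := by rw [← hρ2]; ring
  have hρ6 : (p / R) ^ 6 = (p / q) ^ 3 := by rw [← hρ2]; ring
  have hpow : (1 - p / q + (p / q) ^ 2) ^ ((3 : ℝ) / 2) = (√(p ^ 2 - p * q + q ^ 2) / q) ^ 3 := by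
    have hsq : 1 - p / q + (p / q) ^ 2 = (√(p ^ 2 - p * q + q ^ 2) / q) ^ 2 := by
      rw [div_pow (√_), sq_sqrt_axialCubic_discrim]
      field_simp
      ring
    rw [hsq, ← rpow_natCast_mul (by positivity), ← rpow_natCast]
    norm_num
  rw [bifurcationFunction, hρ2, hρ4, hρ6, hpow, hR, axialCubic_axialCubicPeak]
  field_simp
  ring

lemma bifurcationFunction_pos_iff (hp : 0 < p) (hq : 0 < q) (hR : R ^ 2 = p * q) (hc : c < 0) :
    0 < bifurcationFunction (p / R) (R ^ 2 / c) ↔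
      -c * (q - p) < axialCubic p q (axialCubicPeak p q) := by
  have hscale : 0 < 27 * p / (q ^ 2 * -c) :=
    div_pos (by positivity) (mul_pos (by positivity) (neg_pos.2 hc))
  rw [bifurcationFunction_eq hp hq hR hc.ne, mul_pos_iff_of_pos_left hscale, sub_pos]

lemma two_mul_le_add_of_sq_add_sq_le_mul (hpq : 0 ≤ p + q) (hxy : x ^ 2 + y ^ 2 ≤ p * q) :
    2 * x ≤ p + q :=
  le_of_sq_le_sq (by nlinarith [sq_nonneg y, sq_nonneg (p - q)]) hpq

end ImageVortex

/-- case (d) of Theorem 1: for `φ₀ < 0` and `f(ρ₀, φ₀) > 0` the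
critical points of `X` in `D_R` are exactly a center `(x_c, 0)` and a hyperbolic
saddle `(x_s, 0)` with `0 < x_c < x_M < x_s < r₀`. -/
theorem case_d_two_critical_points
    (R r₀ θ₀ Γ : ℝ)
    (hR : 0 < R) (hr₀ : 0 < r₀) (hrR : r₀ < R) (hθ : θ₀ ≠ 0) (hΓ : Γ ≠ 0)
    (c ρ₀ φ₀ : ℝ) (hc : c = Γ / (2 * Real.pi * θ₀))
    (hρ : ρ₀ = r₀ / R) (hφ : φ₀ = R ^ 2 / c) (hφneg : φ₀ < 0)
    (fval : ℝ)
    (hf : fval = 27 * ρ₀ ^ 2 * (ρ₀ ^ 2 - 1) +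
      φ₀ * (2 - 3 * ρ₀ ^ 2 - 3 * ρ₀ ^ 4 + 2 * ρ₀ ^ 6 -
        2 * (1 - ρ₀ ^ 2 + ρ₀ ^ 4) ^ ((3 : ℝ) / 2)))
    (hfpos : 0 < fval)
    (xM : ℝ)
    (hxM : xM = (R ^ 2 + r₀ ^ 2 - Real.sqrt (R ^ 4 - R ^ 2 * r₀ ^ 2 + r₀ ^ 4)) / (3 * r₀))
    (X : ℝ → ℝ → ℝ × ℝ)
    (hX : ∀ x y : ℝ, X x y =
      (-θ₀ * y + c * θ₀ * y *
          (1 / ((x - r₀) ^ 2 + y ^ 2) - 1 / ((x - R ^ 2 / r₀) ^ 2 + y ^ 2)),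
       θ₀ * x - c * θ₀ *
          ((x - r₀) / ((x - r₀) ^ 2 + y ^ 2) -
            (x - R ^ 2 / r₀) / ((x - R ^ 2 / r₀) ^ 2 + y ^ 2)))) :
    ∃ xc xs : ℝ,
      0 < xc ∧ xc < xM ∧ xM < xs ∧ xs < r₀ ∧
      X xc 0 = (0, 0) ∧ 0 < (jacobianMatrix X xc 0).det ∧
      X xs 0 = (0, 0) ∧ (jacobianMatrix X xs 0).det < 0 ∧
      (∀ x y : ℝ, x ^ 2 + y ^ 2 ≤ R ^ 2 → (x, y) ≠ (r₀, 0) → X x y = (0, 0) →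
        (x, y) = (xc, 0) ∨ (x, y) = (xs, 0)) := by
  have hc_neg : c < 0 := neg_of_div_neg_right (hφ ▸ hφneg) (sq_nonneg R)
  set q := R ^ 2 / r₀ with hq_def
  have hq : R ^ 2 = r₀ * q := by rw [hq_def]; field_simp
  have hrq : r₀ < q := hrR.trans (by rw [hq_def, lt_div_iff₀ hr₀]; nlinarith)
  have hmax : -c * (q - r₀) < axialCubic r₀ q (axialCubicPeak r₀ q) := by
    rw [← bifurcationFunction_pos_iff hr₀ (hr₀.trans hrq) hq hc_neg, ← hρ, ← hφ]
    rwa [hf] at hfpos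
  obtain rfl : X = vortexPairField r₀ q θ₀ c := funext₂ hX
  rw [hxM, ← axialCubicPeak_of_sq_eq_mul hr₀ hq]
  obtain ⟨xc, hxc, xs, hxs, hXc, hdetc, hXs, hdets, honly⟩ :=
    exists_center_saddle_vortexPairField hr₀ hrq hθ hc_neg hmax
  refine ⟨xc, xs, hxc.1, hxc.2, hxs.1, hxs.2, hXc, hdetc, hXs, hdets, fun x y hxy => ?_⟩
  exact honly x y (two_mul_le_add_of_sq_add_sq_le_mul (by linarith) (hq ▸ hxy))
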